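/- Let s be an integer greater than 27, and let A_s^{(2)} be the set of nonzero integers r such that s/r is a 2-step relation number. Then the lower density of A_s^{(2)} satisfies liminf_{N→∞} #(A_s^{(2)} ∩ [1,N])/N ≥ 1 − (1 − 11/s) · ∏_{n=1}^∞ (1 − 4/s^{2^n − 1}). -/

import Mathlib

/-- `a = [[1,0],[1,1]]` as an element of `SL(2, ℂ)`. -/
def matA : Matrix.SpecialLinearGroup (Fin 2) ℂ :=
  ⟨!![1, 0; 1, 1], by simp [Matrix.det_fin_two_of]⟩

/-- `b_q = [[1,q],[0,1]]` as an element of `SL(2, ℂ)`. -/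
def matB (q : ℂ) : Matrix.SpecialLinearGroup (Fin 2) ℂ :=
  ⟨!![1, q; 0, 1], by simp [Matrix.det_fin_two_of]⟩

/-- `q` is a relation number: the homomorphism `F₂ → SL(2,ℂ)`, `x ↦ a`, `y ↦ b_q`,
is not injective. -/
def IsRelationNumber (q : ℂ) : Prop :=
  ¬ Function.Injective
    (FreeGroup.lift (fun i : Bool => if i then matA else matB q) :
      FreeGroup Bool →* Matrix.SpecialLinearGroup (Fin 2) ℂ)

/-- `q` is an `ℓ`-step relation number: there are `k ≤ ℓ` and nonzero integers
`m_1, …, m_{2k+1}` with `b_q^{m_1} a^{m_2} ⋯ b_q^{m_{2k+1}}` lower triangular. -/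
def IsStepRelationNumber (ℓ : ℕ) (q : ℂ) : Prop :=
  ∃ k : ℕ, k ≤ ℓ ∧ ∃ m : Fin (2 * k + 1) → ℤ, (∀ i, m i ≠ 0) ∧
    ((List.ofFn (fun i : Fin (2 * k + 1) =>
      (if (i : ℕ) % 2 = 0 then matB q else matA) ^ (m i))).prod).val 0 1 = 0

/-- The residue class `w + smℤ` is `s`-good with good representative `w`. -/
def IsGoodRep (s w m : ℤ) : Prop :=
  ∃ y : ℤ, y * (Int.gcd w (s * m) : ℤ) ∣ m * (Int.gcd w s : ℤ) ∧
    (w ∣ s * m * y + (Int.gcd w (s * m) : ℤ) ∨ w ∣ s * m * y - (Int.gcd w (s * m) : ℤ))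

/-!
If `v = 1 + s * j` divides `r = v * k`, then `b_q ^ 1 * a ^ (-(j * k)) * b_q ^ (-v)` is lower
triangular for `q = s / r`, so every positive `r` with a prime factor congruent to `1` modulo `s`
already makes `s / r` a one-step relation number. By the analytic form of Dirichlet's theorem the
reciprocals of these primes have a divergent sum, so sieving by them leaves a set of density `0`.
Hence the set in question has density `1`, and `1` dominates the claimed bound because all factors
of the product are nonnegative.
-/

open Filter Topology Finset

section Matrices

variable {q : ℂ} {ℓ : ℕ}

lemma coe_matB_zpow (q : ℂ) (n : ℤ) : (matB q ^ n).val = !![1, n * q; 0, 1] := by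
  induction n using Int.induction_on with
  | zero => simp [Matrix.one_fin_two]
  | succ n ih =>
    rw [zpow_add_one, Matrix.SpecialLinearGroup.coe_mul, ih]
    simp [matB, add_mul, add_comm]
  | pred n ih =>
    rw [zpow_sub_one, Matrix.SpecialLinearGroup.coe_mul, ih, Matrix.SpecialLinearGroup.coe_inv]
    simp [matB, Matrix.adjugate_fin_two, sub_mul, neg_add_eq_sub]

lemma coe_matA_zpow (n : ℤ) : (matA ^ n).val = !![1, 0; (n : ℂ), 1] := by
  induction n using Int.induction_on with
  | zero => simp [Matrix.one_fin_two]
  | succ n ih =>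
    rw [zpow_add_one, Matrix.SpecialLinearGroup.coe_mul, ih]
    simp [matA]
  | pred n ih =>
    rw [zpow_sub_one, Matrix.SpecialLinearGroup.coe_mul, ih, Matrix.SpecialLinearGroup.coe_inv]
    simp [matA, Matrix.adjugate_fin_two, sub_eq_add_neg]

lemma isStepRelationNumber_zero (ℓ : ℕ) : IsStepRelationNumber ℓ 0 :=
  ⟨0, ℓ.zero_le, fun _ ↦ 1, by simp, by simpa using show (matB 0).val 0 1 = 0 from rfl⟩

lemma isStepRelationNumber_of_add_add_mul_eq_zero (hℓ : 1 ≤ ℓ) {m₁ m₂ m₃ : ℤ}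
    (hm₁ : m₁ ≠ 0) (hm₂ : m₂ ≠ 0) (hm₃ : m₃ ≠ 0) (hq : m₁ + m₃ + m₁ * m₂ * m₃ * q = 0) :
    IsStepRelationNumber ℓ q := by
  refine ⟨1, hℓ, ![m₁, m₂, m₃], fun i ↦ by fin_cases i <;> assumption, ?_⟩
  have entry_eq : (matB q ^ m₁ * (matA ^ m₂ * matB q ^ m₃)).val 0 1 =
      q * (m₁ + m₃ + m₁ * m₂ * m₃ * q) := by
    simp only [Matrix.SpecialLinearGroup.coe_mul, coe_matB_zpow, coe_matA_zpow,
      Matrix.mul_fin_two, Matrix.of_apply, Matrix.cons_val_zero, Matrix.cons_val_one]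
    ring
  simpa [List.ofFn_succ, hq] using entry_eq

lemma isStepRelationNumber_div_of_dvd (hℓ : 1 ≤ ℓ) {s j r : ℤ} (hj : j ≠ 0) (hr : r ≠ 0)
    (hdvd : 1 + s * j ∣ r) : IsStepRelationNumber ℓ ((s : ℂ) / r) := by
  obtain ⟨k, rfl⟩ := hdvd
  obtain ⟨hv, hk⟩ := mul_ne_zero_iff.mp hr
  refine isStepRelationNumber_of_add_add_mul_eq_zero hℓ one_ne_zero
    (neg_ne_zero.mpr (mul_ne_zero hj hk)) (neg_ne_zero.mpr hv) ?_
  have hk' : (k : ℂ) ≠ 0 := mod_cast hk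
  have hv' : (1 + s * j : ℂ) ≠ 0 := mod_cast hv
  push_cast
  field_simp
  ring

end Matrices

section Dirichlet

open ArithmeticFunction.vonMangoldt

lemma norm_mul_mul_exp_neg_le (w : ℝ) {z : ℝ} (hz : 0 ≤ z) :
    ‖w * (z * Real.exp (-z))‖ ≤ |w| := by
  rw [norm_mul, Real.norm_eq_abs, Real.norm_of_nonneg (by positivity)]
  refine mul_le_of_le_one_right (abs_nonneg w) ?_
  exact (Real.mul_exp_neg_le_exp_neg_one z).trans (Real.exp_le_one_iff.mpr (by norm_num))

lemma tendsto_tsum_mul_mul_exp_neg_nhdsGT_zero {ι : Type*} {w y : ι → ℝ} (hw : Summable w)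
    (hy : ∀ i, 0 ≤ y i) :
    Tendsto (fun t ↦ ∑' i, w i * (t * y i * Real.exp (-(t * y i)))) (𝓝[>] 0) (𝓝 0) := by
  rw [show 𝓝 (0 : ℝ) = 𝓝 (∑' _ : ι, 0) by rw [tsum_zero]]
  refine tendsto_tsum_of_dominated_convergence hw.abs (fun i ↦ ?_) ?_
  · have hcont : Continuous fun t ↦ w i * (t * y i * Real.exp (-(t * y i))) := by fun_prop
    simpa using (hcont.tendsto 0).mono_left nhdsWithin_le_nhds
  · filter_upwards [self_mem_nhdsWithin] with t ht i
    exact norm_mul_mul_exp_neg_le (w i) (mul_nonneg (le_of_lt ht) (hy i))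

lemma one_div_rpow_one_add_eq {x : ℝ} (hx : 0 < x) (t : ℝ) :
    1 / x ^ (1 + t) = 1 / x * Real.exp (-(t * Real.log x)) := by
  rw [Real.rpow_add hx, Real.rpow_one, Real.rpow_def_of_pos hx, mul_comm t, Real.exp_neg]
  simp only [one_div, mul_inv]

variable {q : ℕ} {a : ZMod q}

/-- The primes in the residue class `a` modulo `q`, by which the integers are sieved for `a = 1`. -/
def primesEqMod (a : ZMod q) : Set ℕ := {p | p.Prime ∧ (p : ZMod q) = a}

lemma mul_residueClass_div_rpow_le (a : ZMod q) {t : ℝ} (ht : 0 ≤ t) (n : ℕ) :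
    t * (residueClass a n / (n : ℝ) ^ (1 + t)) ≤
      (primesEqMod a).indicator (fun n : ℕ ↦ 1 / (n : ℝ)) n *
          (t * Real.log n * Real.exp (-(t * Real.log n))) +
        t * ((if n.Prime then 0 else residueClass a n) / n) := by
  rcases n.eq_zero_or_pos with rfl | hn
  · simp
  by_cases hp : n.Prime
  · by_cases ha : (n : ZMod q) = a
    · refine le_of_eq ?_
      simp only [residueClass, primesEqMod, Set.indicator_apply, Set.mem_ofPred_eq, hp, ha,
        and_self, if_true, ArithmeticFunction.vonMangoldt_apply_prime hp, zero_div, mul_zero,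
        add_zero]
      rw [← mul_one_div, one_div_rpow_one_add_eq (mod_cast hn)]
      ring
    · simp [residueClass, primesEqMod, hp, ha]
  · have hrpow : (n : ℝ) ≤ (n : ℝ) ^ (1 + t) :=
      Real.self_le_rpow_of_one_le (mod_cast hn) (by linarith)
    simp only [primesEqMod, Set.indicator_apply, Set.mem_ofPred_eq, hp, false_and, if_false,
      zero_mul, zero_add]
    gcongr

lemma mul_tsum_residueClass_div_rpow_le
    (hw : Summable ((primesEqMod a).indicator fun n : ℕ ↦ 1 / (n : ℝ)))
    {t : ℝ} (ht : 0 ≤ t) :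
    t * ∑' n : ℕ, residueClass a n / (n : ℝ) ^ (1 + t) ≤
      ∑' n : ℕ, (primesEqMod a).indicator (fun n : ℕ ↦ 1 / (n : ℝ)) n *
          (t * Real.log n * Real.exp (-(t * Real.log n))) +
        t * ∑' n : ℕ, (if n.Prime then 0 else residueClass a n) / n := by
  have hprime := Summable.of_norm_bounded hw.abs fun n ↦
    norm_mul_mul_exp_neg_le ((primesEqMod a).indicator _ n)
      (mul_nonneg ht (Real.log_natCast_nonneg n))
  have hnonprime := (summable_residueClass_non_primes_div a).mul_left t
  have hle := mul_residueClass_div_rpow_le a ht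
  have hnonneg (n : ℕ) : 0 ≤ t * (residueClass a n / (n : ℝ) ^ (1 + t)) := by
    have := residueClass_nonneg a n
    positivity
  rw [← tsum_mul_left, ← tsum_mul_left, ← hprime.tsum_add hnonprime]
  exact Summable.tsum_le_tsum hle
    (.of_nonneg_of_le hnonneg hle (hprime.add hnonprime)) (hprime.add hnonprime)

/-- The Dirichlet series of the von Mangoldt function on the class of `a` grows like
`(φ q * t)⁻¹` at `1 + t`, whereas convergence of `∑ 1 / p` would make it `o(1 / t)`. -/
theorem not_summable_one_div_on_primesEqMod [NeZero q] (ha : IsUnit a) :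
    ¬ Summable ((primesEqMod a).indicator fun n : ℕ ↦ 1 / (n : ℝ)) := by
  intro hw
  obtain ⟨C, hC⟩ := LSeries_residueClass_lower_bound ha
  set D := ∑' n : ℕ, (if n.Prime then 0 else residueClass a n) / n
  have herror : Tendsto (fun t : ℝ ↦ t * (D + C)) (𝓝[>] 0) (𝓝 0) :=
    ((continuous_mul_const (D + C)).tendsto' 0 0 (zero_mul _)).mono_left nhdsWithin_le_nhds
  have hlim := (tendsto_tsum_mul_mul_exp_neg_nhdsGT_zero hw Real.log_natCast_nonneg).add herror
  rw [add_zero] at hlim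
  refine (inv_pos.mpr (Nat.cast_pos.mpr (Nat.totient_pos.mpr q.pos_of_neZero))).not_ge
    (ge_of_tendsto (b := (q.totient : ℝ)⁻¹) hlim ?_)
  filter_upwards [Ioc_mem_nhdsGT zero_lt_one] with t ⟨ht₀, ht₁⟩
  have hlower := hC (x := 1 + t) ⟨by linarith, by linarith⟩
  rw [add_sub_cancel_left, sub_le_iff_le_add, div_le_iff₀' ht₀, mul_add] at hlower
  linarith [mul_tsum_residueClass_div_rpow_le hw ht₀.le]

end Dirichlet

section Density

/-- The set `X` of integers has natural density `d`: the proportion of elements of `X` in `[1, N]`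
tends to `d`. As in the definition of the lower density, only positive elements are counted. -/
def HasDensity (X : Set ℤ) (d : ℝ) : Prop :=
  Tendsto (fun N : ℕ ↦ ((X ∩ Set.Icc 1 (N : ℤ)).ncard : ℝ) / N) atTop (𝓝 d)

lemma ncard_Icc_one_natCast (N : ℕ) : (Set.Icc 1 (N : ℤ)).ncard = N := by
  simp [← Finset.coe_Icc, Set.ncard_coe_finset]

lemma hasDensity_univ : HasDensity Set.univ 1 := by
  refine tendsto_const_nhds.congr' ?_
  filter_upwards [eventually_ne_atTop 0] with N hN
  rw [Set.univ_inter, ncard_Icc_one_natCast, div_self (mod_cast hN)]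

lemma ncard_inter_Icc_div_le_one (X : Set ℤ) (N : ℕ) :
    ((X ∩ Set.Icc 1 (N : ℤ)).ncard : ℝ) / N ≤ 1 := by
  refine div_le_one_of_le₀ ?_ N.cast_nonneg
  exact_mod_cast (Set.ncard_le_ncard Set.inter_subset_right (Set.finite_Icc _ _)).trans_eq
    (ncard_Icc_one_natCast N)

lemma HasDensity.mono_one {X Y : Set ℤ} (hX : HasDensity X 1) (hXY : ∀ r ∈ X, 0 < r → r ∈ Y) :
    HasDensity Y 1 := by
  refine tendsto_of_tendsto_of_tendsto_of_le_of_le hX tendsto_const_nhds (fun N ↦ ?_)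
    (ncard_inter_Icc_div_le_one Y)
  have hsub : X ∩ Set.Icc 1 (N : ℤ) ⊆ Y ∩ Set.Icc 1 (N : ℤ) :=
    fun r hr ↦ ⟨hXY r hr.1 hr.2.1, hr.2⟩
  dsimp only
  gcongr
  exact (Set.finite_Icc _ _).inter_of_right _

lemma hasDensity_one_of_forall_eventually_compl_le {X : Set ℤ}
    (h : ∀ ε : ℝ, 0 < ε → ∀ᶠ N : ℕ in atTop, ((Xᶜ ∩ Set.Icc 1 (N : ℤ)).ncard : ℝ) ≤ ε * N) :
    HasDensity X 1 := by
  refine tendsto_order.mpr ⟨fun c hc ↦ ?_, fun c hc ↦ ?_⟩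
  · filter_upwards [h ((1 - c) / 2) (by linarith), eventually_gt_atTop 0] with N hN hN₀
    have hsplit : (X ∩ Set.Icc 1 (N : ℤ)).ncard + (Xᶜ ∩ Set.Icc 1 (N : ℤ)).ncard = N := by
      rw [Set.inter_comm, Set.inter_comm Xᶜ, ← Set.sdiff_eq,
        Set.ncard_inter_add_ncard_sdiff_eq_ncard _ _ (Set.finite_Icc _ _), ncard_Icc_one_natCast]
    have hsplit' : ((X ∩ Set.Icc 1 (N : ℤ)).ncard : ℝ) + (Xᶜ ∩ Set.Icc 1 (N : ℤ)).ncard = N :=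
      mod_cast hsplit
    have hN₀' : (0 : ℝ) < N := mod_cast hN₀
    rw [lt_div_iff₀ hN₀']
    nlinarith
  · exact Eventually.of_forall fun N ↦ (ncard_inter_Icc_div_le_one X N).trans_lt hc

lemma ncard_isCoprime_inter_Icc_le {Q : ℕ} (hQ : Q ≠ 0) (N : ℕ) :
    ({r : ℤ | IsCoprime (Q : ℤ) r} ∩ Set.Icc 1 (N : ℤ)).ncard ≤ Q.totient * (N / Q + 1) := by
  have hsub : {r : ℤ | IsCoprime (Q : ℤ) r} ∩ Set.Icc 1 (N : ℤ) ⊆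
      Nat.cast '' (↑{n ∈ Ico 1 (1 + N) | Q.Coprime n} : Set ℕ) := by
    rintro r ⟨hr, hr₁, hrN⟩
    lift r to ℕ using by omega
    have hr' : r ∈ ({n ∈ Ico 1 (1 + N) | Q.Coprime n} : Finset ℕ) :=
      mem_filter.mpr ⟨mem_Ico.mpr (by omega), Nat.isCoprime_iff_coprime.mp hr⟩
    exact ⟨r, hr', rfl⟩
  calc ({r : ℤ | IsCoprime (Q : ℤ) r} ∩ Set.Icc 1 (N : ℤ)).ncard
      ≤ (Nat.cast '' (↑{n ∈ Ico 1 (1 + N) | Q.Coprime n} : Set ℕ) : Set ℤ).ncard :=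
        Set.ncard_le_ncard hsub ((Finset.finite_toSet _).image _)
    _ = #{n ∈ Ico 1 (1 + N) | Q.Coprime n} := by
        rw [Set.ncard_image_of_injective _ Nat.cast_injective, Set.ncard_coe_finset]
    _ ≤ Q.totient * (N / Q + 1) := Nat.Ico_filter_coprime_le 1 N hQ

lemma eventually_ncard_isCoprime_inter_Icc_le {Q : ℕ} (hQ : Q ≠ 0) {ε : ℝ}
    (hε : (Q.totient : ℝ) / Q < ε) :
    ∀ᶠ N : ℕ in atTop,
      (({r : ℤ | IsCoprime (Q : ℤ) r} ∩ Set.Icc 1 (N : ℤ)).ncard : ℝ) ≤ ε * N := by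
  have hslack : Tendsto (fun N : ℕ ↦ (ε - Q.totient / Q) * N) atTop atTop :=
    tendsto_natCast_atTop_atTop.const_mul_atTop (sub_pos.mpr hε)
  filter_upwards [hslack.eventually_ge_atTop (Q.totient : ℝ)] with N hN
  calc (({r : ℤ | IsCoprime (Q : ℤ) r} ∩ Set.Icc 1 (N : ℤ)).ncard : ℝ)
      ≤ Q.totient * ((N / Q : ℕ) + 1) := mod_cast ncard_isCoprime_inter_Icc_le hQ N
    _ ≤ Q.totient * (N / Q + 1) := by gcongr; exact Nat.cast_div_le
    _ = Q.totient / Q * N + Q.totient := by ring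
    _ ≤ ε * N := by linarith

lemma totient_prod_primes_div {P : Finset ℕ} (hP : ∀ p ∈ P, p.Prime) :
    ((∏ p ∈ P, p).totient : ℝ) / (∏ p ∈ P, p : ℕ) = ∏ p ∈ P, (1 - 1 / (p : ℝ)) := by
  have hne : ((∏ p ∈ P, p : ℕ) : ℝ) ≠ 0 :=
    mod_cast prod_ne_zero_iff.mpr fun p hp ↦ (hP p hp).ne_zero
  have htotient := congrArg (Rat.cast : ℚ → ℝ) (Nat.totient_eq_mul_prod_factors (∏ p ∈ P, p))
  rw [Nat.primeFactors_prod hP] at htotient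
  rw [div_eq_iff hne, mul_comm]
  simpa using htotient

variable {S : Set ℕ}

lemma exists_finset_prod_one_sub_lt
    (hdiv : ¬ Summable (S.indicator fun n : ℕ ↦ 1 / (n : ℝ))) {ε : ℝ} (hε : 0 < ε) :
    ∃ P : Finset ℕ, ↑P ⊆ S ∧ ∏ n ∈ P, (1 - 1 / (n : ℝ)) < ε := by
  classical
  rw [not_summable_iff_tendsto_nat_atTop_of_nonneg
    fun n ↦ Set.indicator_nonneg (fun _ _ ↦ by positivity) n] at hdiv
  obtain ⟨N, hN⟩ := (hdiv.eventually_gt_atTop (-Real.log ε)).exists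
  refine ⟨{n ∈ range N | n ∈ S}, fun n hn ↦ (mem_filter.mp hn).2, ?_⟩
  calc ∏ n ∈ range N with n ∈ S, (1 - 1 / (n : ℝ))
      ≤ ∏ n ∈ range N with n ∈ S, Real.exp (-(1 / (n : ℝ))) :=
        prod_le_prod (fun n _ ↦ Nat.one_sub_one_div_cast_nonneg n) fun n _ ↦
          Real.one_sub_le_exp_neg _
    _ = Real.exp (-∑ n ∈ range N, S.indicator (fun n : ℕ ↦ 1 / (n : ℝ)) n) := by
        rw [← Real.exp_sum, sum_neg_distrib, sum_filter]
        simp only [Set.indicator_apply]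
    _ < Real.exp (Real.log ε) := Real.exp_lt_exp.mpr (by linarith)
    _ = ε := Real.exp_log hε

theorem hasDensity_one_setOf_exists_prime_dvd (hS : ∀ p ∈ S, p.Prime)
    (hdiv : ¬ Summable (S.indicator fun n : ℕ ↦ 1 / (n : ℝ))) :
    HasDensity {r : ℤ | ∃ p ∈ S, (p : ℤ) ∣ r} 1 := by
  refine hasDensity_one_of_forall_eventually_compl_le fun ε hε ↦ ?_
  obtain ⟨P, hPS, hPε⟩ := exists_finset_prod_one_sub_lt hdiv hε
  have hP : ∀ p ∈ P, p.Prime := fun p hp ↦ hS p (hPS hp)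
  have hQ : ∏ p ∈ P, p ≠ 0 := prod_ne_zero_iff.mpr fun p hp ↦ (hP p hp).ne_zero
  have hcompl : {r : ℤ | ∃ p ∈ S, (p : ℤ) ∣ r}ᶜ ⊆ {r : ℤ | IsCoprime ((∏ p ∈ P, p : ℕ) : ℤ) r} := by
    intro r hr
    rw [Set.mem_ofPred_eq, Nat.cast_prod]
    refine IsCoprime.prod_left fun p hp ↦ ?_
    exact (Nat.prime_iff_prime_int.mp (hP p hp)).coprime_iff_not_dvd.mpr
      fun hpr ↦ hr ⟨p, hPS hp, hpr⟩
  filter_upwards [eventually_ncard_isCoprime_inter_Icc_le hQ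
    ((totient_prod_primes_div hP).trans_lt hPε)] with N hN
  refine le_trans ?_ hN
  gcongr
  exact (Set.finite_Icc _ _).inter_of_right _

end Density

lemma one_sub_mul_tprod_le_one {s : ℝ} (hs : 11 ≤ s) :
    1 - (1 - 11 / s) * (∏' n : ℕ, (1 - 4 / s ^ (2 ^ (n + 1) - 1))) ≤ 1 := by
  have hs₀ : 0 < s := by linarith
  have hs₁ : 1 ≤ s := by linarith
  refine sub_le_self _ (mul_nonneg (sub_nonneg.mpr ((div_le_one hs₀).mpr hs)) ?_)
  refine tprod_nonneg fun n ↦ sub_nonneg.mpr ((div_le_one (by positivity)).mpr ?_)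
  have hexp : 2 ^ (n + 1) - 1 ≠ 0 :=
    Nat.sub_ne_zero_of_lt (Nat.one_lt_two_pow n.succ_ne_zero)
  linarith [le_self_pow₀ hs₁ hexp]

theorem stmt3_general (s : ℤ) {ℓ : ℕ} (hℓ : 1 ≤ ℓ) :
    HasDensity {r : ℤ | r ≠ 0 ∧ IsStepRelationNumber ℓ ((s : ℂ) / (r : ℂ))} 1 := by
  rcases eq_or_ne s 0 with rfl | hs
  · refine hasDensity_univ.mono_one fun r _ hr ↦ ⟨hr.ne', ?_⟩
    simpa using isStepRelationNumber_zero ℓ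
  have : NeZero s.natAbs := ⟨Int.natAbs_ne_zero.mpr hs⟩
  refine (hasDensity_one_setOf_exists_prime_dvd (fun p hp ↦ hp.1)
    (not_summable_one_div_on_primesEqMod (q := s.natAbs) isUnit_one)).mono_one ?_
  rintro r ⟨p, ⟨hp, hp₁⟩, hpr⟩ hr
  have hdvd : s ∣ (p : ℤ) - 1 := by
    rw [← Int.natAbs_dvd, ← ZMod.intCast_eq_intCast_iff_dvd_sub]
    simp [hp₁]
  obtain ⟨j, hj⟩ := hdvd
  have hpj : (p : ℤ) = 1 + s * j := by omega
  have hj₀ : j ≠ 0 := by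
    rintro rfl
    exact hp.ne_one (by simpa using hpj)
  exact ⟨hr.ne', isStepRelationNumber_div_of_dvd hℓ hj₀ hr.ne' (hpj ▸ hpr)⟩

theorem stmt3 (s : ℤ) (hs : 27 < s) :
    1 - (1 - 11 / (s : ℝ)) * (∏' n : ℕ, (1 - 4 / (s : ℝ) ^ (2 ^ (n + 1) - 1))) ≤
      Filter.liminf
        (fun N : ℕ =>
          (({r : ℤ | r ≠ 0 ∧ IsStepRelationNumber 2 ((s : ℂ) / (r : ℂ))} ∩
              Set.Icc (1 : ℤ) (N : ℤ)).ncard : ℝ) / (N : ℝ))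
        Filter.atTop :=
  (one_sub_mul_tprod_le_one (by exact_mod_cast (by omega : 11 ≤ s))).trans_eq
    (stmt3_general s one_le_two).liminf_eq.symm
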